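/- arXiv:2405.06314 — 5 statements merged into one kernel-verified Lean document; each statement's English description precedes it below -/
import Mathlib

section
/- Let X be an open subset of ℝ^p, let f : X → ℝ^q be a Lipschitz function, let a ∈ X, and let π_i : ℝ^q → ℝ denote the i-th coordinate projection (1 ≤ i ≤ q). Then the Clarke subdifferential of the scalar function π_i ∘ f at a equals the image of the Clarke subdifferential of f at a under post-composition with π_i, i.e. ∂(π_i ∘ f)(a) = {π_i ∘ u : u ∈ ∂f(a)}. -/
/-!
Nothing is special about `π_i`: any linear functional `ℓ` may take its place. Post-composition with
`ℓ` sends limits of derivatives of `f` to limits of derivatives of `ℓ ∘ f` and commutes with convex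
hulls, which gives `⊇`.

For `⊆` the difficulty is that `ℓ ∘ f` may be differentiable where `f` is not. Suppose a limit `v`
of derivatives of `ℓ ∘ f` at `a` lies outside the convex hull of `{ℓ ∘ u}`, `u` ranging over the
limits of derivatives of `f`. This hull is compact, so Hahn–Banach, in finite dimension, gives a
direction `w` and a constant `c` with `ℓ (u w) < c < v w` for all such `u`. By compactness the
derivative of `ℓ ∘ f` in the direction `w` is less than `c` at every point near `a` where `f` is
differentiable, hence almost everywhere near `a` by Rademacher's theorem. By Fubini this bound holds
almost everywhere on almost every line parallel to `w`; integrating along such lines shows, by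
continuity, that `ℓ ∘ f` increases by at most `c * t` along every short segment `[x, x + t • w]`
near `a`. So the directional derivative is at most `c` at *every* point near `a` where it exists,
and `v w ≤ c`, a contradiction.
-/

open Filter Topology Metric MeasureTheory

/-- Kuratowski lower limit of a sequence of sets. -/
def KLiminf {α : Type*} [TopologicalSpace α] (A : ℕ → Set α) : Set α :=
  {x | ∃ u : ℕ → α, (∀ n, u n ∈ A n) ∧ Tendsto u atTop (𝓝 x)}

/-- Kuratowski upper limit of a sequence of sets. -/
def KLimsup {α : Type*} [TopologicalSpace α] (A : ℕ → Set α) : Set α :=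
  {x | ∃ φ : ℕ → ℕ, StrictMono φ ∧
    ∃ u : ℕ → α, (∀ n, u n ∈ A (φ n)) ∧ Tendsto u atTop (𝓝 x)}

/-- Painlevé–Kuratowski convergence of a sequence of sets to `L`. -/
def KConv {α : Type*} [TopologicalSpace α] (A : ℕ → Set α) (L : Set α) : Prop :=
  KLiminf A = L ∧ KLimsup A = L

/-- The Clarke subdifferential of `f` at `x`, relative to the open set `Ω`:
the convex hull of all limits of derivatives of `f` taken at points of
differentiability of `f` inside `Ω` converging to `x`. -/
noncomputable def clarke {p : ℕ} {F : Type*} [NormedAddCommGroup F] [NormedSpace ℝ F]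
    (Ω : Set (EuclideanSpace ℝ (Fin p))) (f : EuclideanSpace ℝ (Fin p) → F)
    (x : EuclideanSpace ℝ (Fin p)) : Set (EuclideanSpace ℝ (Fin p) →L[ℝ] F) :=
  convexHull ℝ {u | ∃ y : ℕ → EuclideanSpace ℝ (Fin p),
    (∀ n, y n ∈ Ω) ∧ (∀ n, DifferentiableAt ℝ f (y n)) ∧
    Tendsto y atTop (𝓝 x) ∧ Tendsto (fun n => fderiv ℝ f (y n)) atTop (𝓝 u)}

/-- The graph of a multifunction `F` restricted to `Ω`. -/
def mgraph {α β : Type*} (Ω : Set α) (F : α → Set β) : Set (α × β) :=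
  {q | q.1 ∈ Ω ∧ q.2 ∈ F q.1}

lemma sub_le_mul_of_ae_deriv_le {f : ℝ → ℝ} {a b c : ℝ} (hab : a ≤ b)
    (hf : AbsolutelyContinuousOnInterval f a b)
    (h : ∀ᵐ x, x ∈ Set.Icc a b → deriv f x ≤ c) : f b - f a ≤ c * (b - a) :=
  calc f b - f a = ∫ x in a..b, deriv f x := hf.integral_deriv_eq_sub.symm
    _ ≤ ∫ _ in a..b, c :=
      intervalIntegral.integral_mono_ae_restrict hab hf.intervalIntegrable_deriv
        intervalIntegrable_const ((ae_restrict_iff' measurableSet_Icc).2 h)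
    _ = c * (b - a) := by rw [intervalIntegral.integral_const, smul_eq_mul, mul_comm]

section LineDeriv

variable {E : Type*} [NormedAddCommGroup E] [NormedSpace ℝ E]
  {f : E → ℝ} {K : NNReal} {s : Set E} {x v : E} {c : ℝ}

lemma lipschitzOnWith_comp_add_smul {F : Type*} [PseudoEMetricSpace F] {f : E → F}
    (hf : LipschitzOnWith K f s) {I : Set ℝ} (hI : Set.MapsTo (fun t : ℝ => x + t • v) I s) :
    LipschitzOnWith (K * ‖v‖₊) (fun t : ℝ => f (x + t • v)) I := by
  have hline : LipschitzWith ‖v‖₊ fun t : ℝ => x + t • v :=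
    LipschitzWith.of_dist_le_mul fun r t => by
      rw [dist_add_left, dist_eq_norm, ← sub_smul, norm_smul, dist_eq_norm, mul_comm, coe_nnnorm]
  exact hf.comp hline.lipschitzOnWith hI

lemma deriv_comp_add_smul {F : Type*} [NormedAddCommGroup F] [NormedSpace ℝ F] (f : E → F)
    (x v : E) (t : ℝ) :
    deriv (fun r : ℝ => f (x + r • v)) t = lineDeriv ℝ f (x + t • v) v := by
  have hshift := deriv_comp_const_add (f := fun r : ℝ => f (x + r • v)) t 0
  rw [add_zero] at hshift
  rw [lineDeriv, ← hshift]
  simp only [add_smul, add_assoc]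

lemma sub_le_of_ae_lineDeriv_le_on_segment (hf : LipschitzOnWith K f (segment ℝ x (x + v)))
    (h : ∀ᵐ t : ℝ, t ∈ Set.Icc 0 1 → lineDeriv ℝ f (x + t • v) v ≤ c) : f (x + v) - f x ≤ c := by
  have hseg : Set.MapsTo (fun t : ℝ => x + t • v) (Set.uIcc 0 1) (segment ℝ x (x + v)) :=
    fun t ht => (convex_segment x (x + v)).add_smul_mem (left_mem_segment ℝ _ _)
      (right_mem_segment ℝ _ _) (by rwa [Set.uIcc_of_le zero_le_one] at ht)
  have hincr := sub_le_mul_of_ae_deriv_le zero_le_one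
    (lipschitzOnWith_comp_add_smul hf hseg).absolutelyContinuousOnInterval (c := c)
    (by simpa only [deriv_comp_add_smul] using h)
  simpa using hincr

variable [FiniteDimensional ℝ E] [MeasurableSpace E] [BorelSpace E] {μ : Measure E}
  [μ.IsAddHaarMeasure]

lemma ae_ae_add_smul_of_ae {P : E → Prop} (h : ∀ᵐ x ∂μ, P x) (v : E) :
    ∀ᵐ x ∂μ, ∀ᵐ t : ℝ, P (x + t • v) := by
  obtain ⟨N, hPN, hN, hN0⟩ := exists_measurable_superset_of_null (ae_iff.1 h)
  have hlines := (ae_ae_add_linearMap_mem_iff (LinearMap.toSpanSingleton ℝ E v) volume μ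
    hN.compl).2 (measure_eq_zero_iff_ae_notMem.1 hN0)
  filter_upwards [hlines] with x hx
  filter_upwards [hx] with t ht
  exact not_not.1 fun hP => ht (hPN hP)

lemma sub_le_of_ae_lineDeriv_le (hso : IsOpen s) (hs : Convex ℝ s) (hf : LipschitzOnWith K f s)
    (h : ∀ᵐ y ∂μ, y ∈ s → lineDeriv ℝ f y v ≤ c) (hx : x ∈ s) (hxv : x + v ∈ s) :
    f (x + v) - f x ≤ c := by
  have hdense : Dense {y | ∀ᵐ t : ℝ, y + t • v ∈ s → lineDeriv ℝ f (y + t • v) v ≤ c} :=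
    μ.dense_of_ae (ae_ae_add_smul_of_ae h v)
  have hU : IsOpen (s ∩ (· + v) ⁻¹' s) := hso.inter (hso.preimage (by fun_prop))
  have hfx : ContinuousAt f x := hf.continuousOn.continuousAt (hso.mem_nhds hx)
  have hfxv : ContinuousAt (fun y => f (y + v)) x :=
    ContinuousAt.comp (g := f) (hf.continuousOn.continuousAt (hso.mem_nhds hxv)) (by fun_prop)
  refine ContinuousWithinAt.closure_le (hdense.open_subset_closure_inter hU ⟨hx, hxv⟩)
    (hfxv.sub hfx).continuousWithinAt continuousWithinAt_const ?_
  rintro y ⟨⟨hy, hyv⟩, hline⟩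
  refine sub_le_of_ae_lineDeriv_le_on_segment (hf.mono (hs.segment_subset hy hyv)) ?_
  filter_upwards [hline] with t ht htI using ht (hs.add_smul_mem hy hyv htI)

lemma lineDeriv_le_of_ae_lineDeriv_le (hs : s ∈ 𝓝 x) (hf : LipschitzOnWith K f s)
    (h : ∀ᵐ y ∂μ, y ∈ s → lineDeriv ℝ f y v ≤ c) (hd : LineDifferentiableAt ℝ f x v) :
    lineDeriv ℝ f x v ≤ c := by
  obtain ⟨δ, hδ, hball⟩ := Metric.mem_nhds_iff.1 hs
  have hline : ∀ᶠ t : ℝ in 𝓝[>] 0, x + t • v ∈ ball x δ := by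
    have hcont : ContinuousAt (fun t : ℝ => x + t • v) 0 := by fun_prop
    exact nhdsWithin_le_nhds (hcont.eventually_mem (by simpa using ball_mem_nhds x hδ))
  refine le_of_tendsto hd.hasLineDerivAt.tendsto_slope_zero_right ?_
  filter_upwards [hline, self_mem_nhdsWithin] with t hxt (ht : 0 < t)
  have hscaled : ∀ᵐ y ∂μ, y ∈ ball x δ → lineDeriv ℝ f y (t • v) ≤ t * c := by
    filter_upwards [h] with y hy hyb
    rw [lineDeriv_smul, smul_eq_mul]
    exact mul_le_mul_of_nonneg_left (hy (hball hyb)) ht.le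
  rw [smul_eq_mul, inv_mul_le_iff₀ ht]
  exact sub_le_of_ae_lineDeriv_le isOpen_ball (convex_ball x δ) (hf.mono hball) hscaled
    (mem_ball_self hδ) hxt

end LineDeriv

section ConvexHull

variable {V : Type*} [NormedAddCommGroup V] [NormedSpace ℝ V] [FiniteDimensional ℝ V]

lemma convexHull_eq_biUnion_image_stdSimplex (s : Set V) :
    convexHull ℝ s = ⋃ k ∈ Finset.range (Module.finrank ℝ V + 2),
      (fun x : (Fin k → ℝ) × (Fin k → V) => ∑ j, x.1 j • x.2 j) ''
        (stdSimplex ℝ (Fin k) ×ˢ Set.univ.pi fun _ => s) := by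
  apply Set.Subset.antisymm
  · intro x hx
    obtain ⟨ι, _, z, w, hz, hind, hpos, hsum, rfl⟩ := eq_pos_convex_span_of_mem_convexHull hx
    have hcard : Fintype.card ι ≤ Module.finrank ℝ V + 1 :=
      hind.card_le_finrank_succ.trans (by gcongr; exact Submodule.finrank_le _)
    let e := Fintype.equivFin ι
    refine Set.mem_biUnion (Finset.mem_range.2 (Nat.lt_succ_of_le hcard))
      ⟨(w ∘ e.symm, z ∘ e.symm), ⟨⟨fun j => (hpos _).le, ?_⟩, fun j _ => hz ⟨_, rfl⟩⟩, ?_⟩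
    · exact (e.symm.sum_comp w).trans hsum
    · exact e.symm.sum_comp fun i => w i • z i
  · refine Set.iUnion₂_subset fun k _ => ?_
    rintro _ ⟨⟨w, z⟩, ⟨⟨hnonneg, hsum⟩, hz⟩, rfl⟩
    exact (convex_convexHull ℝ s).sum_mem (fun j _ => hnonneg j) hsum
      fun j _ => subset_convexHull ℝ s (hz j trivial)

lemma isCompact_convexHull {s : Set V} (hs : IsCompact s) : IsCompact (convexHull ℝ s) := by
  rw [convexHull_eq_biUnion_image_stdSimplex]
  exact (Finset.range _).isCompact_biUnion fun k _ =>
    ((isCompact_stdSimplex ℝ (Fin k)).prod (isCompact_univ_pi fun _ => hs)).image (by fun_prop)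

lemma exists_apply_lt_lt_apply_of_notMem {C : Set (V →L[ℝ] ℝ)} (hconv : Convex ℝ C)
    (hclosed : IsClosed C) {v : V →L[ℝ] ℝ} (hv : v ∉ C) :
    ∃ (w : V) (c : ℝ), (∀ u ∈ C, u w < c) ∧ c < v w := by
  obtain ⟨φ, c, hlt, hcv⟩ := geometric_hahn_banach_closed_point hconv hclosed hv
  let w : V := (Module.evalEquiv ℝ V).symm
    (φ.toLinearMap ∘ₗ (LinearMap.toContinuousLinearMap (𝕜 := ℝ) (E := V) (F' := ℝ)).toLinearMap)
  have hφ : ∀ u : V →L[ℝ] ℝ, u w = φ u := fun u =>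
    Module.apply_evalEquiv_symm_apply ℝ V u.toLinearMap _
  exact ⟨w, c, fun u hu => (hφ u).trans_lt (hlt u hu), hcv.trans_eq (hφ v).symm⟩

end ConvexHull

section LimitDerivs

variable {E F G : Type*} [NormedAddCommGroup E] [NormedSpace ℝ E]
  [NormedAddCommGroup F] [NormedSpace ℝ F] [NormedAddCommGroup G] [NormedSpace ℝ G]

/-- The limits at `a` of derivatives of `f`, taken at points of differentiability: the set whose
convex hull is the Clarke subdifferential. It is encoded by cluster points instead of limits of
sequences. -/
def limitDerivs (f : E → F) (a : E) : Set (E →L[ℝ] F) :=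
  {u | MapClusterPt u (𝓝[{y | DifferentiableAt ℝ f y}] a) (fderiv ℝ f)}

lemma clarke_eq_convexHull_limitDerivs {p : ℕ} {X : Set (EuclideanSpace ℝ (Fin p))}
    {a : EuclideanSpace ℝ (Fin p)} (hX : X ∈ 𝓝 a) (f : EuclideanSpace ℝ (Fin p) → F) :
    clarke X f a = convexHull ℝ (limitDerivs f a) := by
  refine congrArg (convexHull ℝ) (Set.Subset.antisymm ?_ fun u hu => ?_)
  · rintro u ⟨y, -, hd, hya, hyu⟩
    exact .of_comp (tendsto_nhdsWithin_iff.2 ⟨hya, .of_forall hd⟩) hyu.mapClusterPt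
  · obtain ⟨y, hyu, hya⟩ := hu.exists_seq_tendsto
    obtain ⟨hya, hd⟩ := tendsto_nhdsWithin_iff.1 hya
    obtain ⟨N, hN⟩ := eventually_atTop.1 ((hya.eventually_mem hX).and hd)
    exact ⟨fun n => y (n + N), fun n => (hN _ (Nat.le_add_left N n)).1,
      fun n => (hN _ (Nat.le_add_left N n)).2, hya.comp (tendsto_add_atTop_nat N),
      hyu.comp (tendsto_add_atTop_nat N)⟩

variable {f : E → F} {a : E}

lemma fderiv_continuousLinearMap_comp (ℓ : F →L[ℝ] G) {x : E} (hf : DifferentiableAt ℝ f x) :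
    fderiv ℝ (fun y => ℓ (f y)) x = ℓ.comp (fderiv ℝ f x) :=
  (ℓ.hasFDerivAt.comp x hf.hasFDerivAt).fderiv

lemma comp_mem_limitDerivs (ℓ : F →L[ℝ] G) {u : E →L[ℝ] F} (hu : u ∈ limitDerivs f a) :
    ℓ.comp u ∈ limitDerivs (fun x => ℓ (f x)) a := by
  have hcomp : MapClusterPt (ℓ.comp u) (𝓝[{y | DifferentiableAt ℝ f y}] a)
      fun y => ℓ.comp (fderiv ℝ f y) :=
    hu.continuousAt_comp (f := fun u => ℓ.comp u) (by fun_prop)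
  have heq : (fun y => ℓ.comp (fderiv ℝ f y)) =ᶠ[𝓝[{y | DifferentiableAt ℝ f y}] a]
      fderiv ℝ fun x => ℓ (f x) := by
    filter_upwards [self_mem_nhdsWithin] with y hy using (fderiv_continuousLinearMap_comp ℓ hy).symm
  exact (hcomp.congrFun heq).mono
    (nhdsWithin_mono a fun y hy => ℓ.differentiableAt.comp y hy)

lemma eventually_norm_fderiv_le {K : NNReal} {s : Set E} (hs : s ∈ 𝓝 a)
    (hf : LipschitzOnWith K f s) : ∀ᶠ y in 𝓝 a, ‖fderiv ℝ f y‖ ≤ K := by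
  filter_upwards [eventually_mem_nhds_iff.2 hs] with y hy
  exact norm_fderiv_le_of_lipschitzOn ℝ hy hf

variable [FiniteDimensional ℝ E]

section Bounded

variable [FiniteDimensional ℝ F] {C : ℝ}

lemma isCompact_limitDerivs (hC : ∀ᶠ y in 𝓝 a, ‖fderiv ℝ f y‖ ≤ C) :
    IsCompact (limitDerivs f a) := by
  refine (isCompact_closedBall 0 C).of_isClosed_subset isClosed_setOfPred_clusterPt fun u hu => ?_
  exact isClosed_closedBall.mem_of_mapClusterPt hu
    ((hC.filter_mono nhdsWithin_le_nhds).mono fun y hy => mem_closedBall_zero_iff.2 hy)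

lemma eventually_fderiv_mem_of_limitDerivs_subset (hC : ∀ᶠ y in 𝓝 a, ‖fderiv ℝ f y‖ ≤ C)
    {U : Set (E →L[ℝ] F)} (hU : IsOpen U) (hfU : limitDerivs f a ⊆ U) :
    ∀ᶠ y in 𝓝 a, DifferentiableAt ℝ f y → fderiv ℝ f y ∈ U := by
  have hball : map (fderiv ℝ f) (𝓝[{y | DifferentiableAt ℝ f y}] a) ≤ 𝓟 (closedBall 0 C) :=
    le_principal_iff.2
      ((hC.filter_mono nhdsWithin_le_nhds).mono fun y hy => mem_closedBall_zero_iff.2 hy)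
  have hmem : U ∈ map (fderiv ℝ f) (𝓝[{y | DifferentiableAt ℝ f y}] a) :=
    (isCompact_closedBall 0 C).adherence_nhdset hball hU fun u _ hu => hfU hu
  exact eventually_nhdsWithin_iff.1 hmem

end Bounded

lemma apply_le_of_mem_limitDerivs [MeasurableSpace E] [BorelSpace E] {μ : Measure E}
    [μ.IsAddHaarMeasure] {g : E → ℝ} {K : NNReal} {s : Set E} (hs : s ∈ 𝓝 a)
    (hg : LipschitzOnWith K g s) {w : E} {c : ℝ}
    (h : ∀ᵐ y ∂μ, y ∈ s → lineDeriv ℝ g y w ≤ c) {u : E →L[ℝ] ℝ} (hu : u ∈ limitDerivs g a) :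
    u w ≤ c := by
  have hclosed : IsClosed {u : E →L[ℝ] ℝ | u w ≤ c} := isClosed_le (by fun_prop) continuous_const
  refine hclosed.mem_of_mapClusterPt hu ?_
  filter_upwards [self_mem_nhdsWithin, nhdsWithin_le_nhds (eventually_mem_nhds_iff.2 hs)]
    with y (hy : DifferentiableAt ℝ g y) hsy
  exact hy.lineDeriv_eq_fderiv.symm.trans_le
    (lineDeriv_le_of_ae_lineDeriv_le hsy hg h hy.lineDifferentiableAt)

lemma limitDerivs_clm_comp_subset [FiniteDimensional ℝ F] {K : NNReal} {s : Set E}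
    (hs : s ∈ 𝓝 a) (hf : LipschitzOnWith K f s) (ℓ : F →L[ℝ] ℝ) :
    limitDerivs (fun x => ℓ (f x)) a ⊆ convexHull ℝ ((fun u => ℓ.comp u) '' limitDerivs f a) := by
  borelize E
  have hbound := eventually_norm_fderiv_le hs hf
  have hcompact : IsCompact (convexHull ℝ ((fun u => ℓ.comp u) '' limitDerivs f a)) :=
    isCompact_convexHull ((isCompact_limitDerivs hbound).image (by fun_prop))
  intro v hv
  by_contra hvC
  obtain ⟨w, c, hlt, hcv⟩ :=
    exists_apply_lt_lt_apply_of_notMem (convex_convexHull ℝ _) hcompact.isClosed hvC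
  have hnear : ∀ᶠ y in 𝓝 a, DifferentiableAt ℝ f y → ℓ (fderiv ℝ f y w) < c :=
    eventually_fderiv_mem_of_limitDerivs_subset hbound (U := {u | ℓ (u w) < c})
      (isOpen_lt (by fun_prop) continuous_const)
      fun u hu => hlt _ (subset_convexHull ℝ _ ⟨u, hu, rfl⟩)
  let t : Set E := {y | s ∈ 𝓝 y ∧ (DifferentiableAt ℝ f y → ℓ (fderiv ℝ f y w) < c)}
  have ht : t ∈ 𝓝 a := (eventually_mem_nhds_iff.2 hs).and hnear
  have hae : ∀ᵐ y ∂(Measure.addHaar : Measure E),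
      y ∈ t → lineDeriv ℝ (fun x => ℓ (f x)) y w ≤ c := by
    filter_upwards [hf.ae_differentiableWithinAt_of_mem] with y hy ⟨hsy, hlt⟩
    have hd : DifferentiableAt ℝ f y := (hy (mem_of_mem_nhds hsy)).differentiableAt hsy
    have hℓd : DifferentiableAt ℝ (fun x => ℓ (f x)) y := ℓ.differentiableAt.comp y hd
    rw [hℓd.lineDeriv_eq_fderiv, fderiv_continuousLinearMap_comp ℓ hd]
    exact (hlt hd).le
  have hlip : LipschitzOnWith (‖ℓ‖₊ * K) (fun x => ℓ (f x)) t :=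
    (ℓ.lipschitz.comp_lipschitzOnWith hf).mono fun y hy => mem_of_mem_nhds hy.1
  exact hcv.not_ge (apply_le_of_mem_limitDerivs ht hlip hae hv)

end LimitDerivs

theorem stmt_4_general {p : ℕ} {F : Type*} [NormedAddCommGroup F] [NormedSpace ℝ F]
    [FiniteDimensional ℝ F] {X s : Set (EuclideanSpace ℝ (Fin p))}
    {f : EuclideanSpace ℝ (Fin p) → F} {a : EuclideanSpace ℝ (Fin p)} {K : NNReal}
    (hX : X ∈ 𝓝 a) (hs : s ∈ 𝓝 a) (hf : LipschitzOnWith K f s) (ℓ : F →L[ℝ] ℝ) :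
    clarke X (fun x => ℓ (f x)) a = (fun u => ℓ.comp u) '' clarke X f a := by
  have himage : (fun u => ℓ.comp u) '' convexHull ℝ (limitDerivs f a) =
      convexHull ℝ ((fun u => ℓ.comp u) '' limitDerivs f a) :=
    (ContinuousLinearMap.compL ℝ _ F ℝ ℓ).toLinearMap.image_convexHull _
  rw [clarke_eq_convexHull_limitDerivs hX, clarke_eq_convexHull_limitDerivs hX, himage]
  exact Set.Subset.antisymm
    (convexHull_min (limitDerivs_clm_comp_subset hs hf ℓ) (convex_convexHull ℝ _))
    (convexHull_mono (Set.image_subset_iff.2 fun _ => comp_mem_limitDerivs ℓ))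

/-- for a Lipschitz `f : X → ℝ^q` on an open set `X` and `a ∈ X`,
`∂(π_i ∘ f)(a) = {π_i ∘ u : u ∈ ∂f(a)}`. -/
theorem stmt_4 {p q : ℕ} (X : Set (EuclideanSpace ℝ (Fin p))) (hXopen : IsOpen X)
    (f : EuclideanSpace ℝ (Fin p) → EuclideanSpace ℝ (Fin q))
    (L : ℝ) (hL : 0 < L)
    (hLip : ∀ x ∈ X, ∀ y ∈ X, ‖f x - f y‖ ≤ L * ‖x - y‖)
    (a : EuclideanSpace ℝ (Fin p)) (ha : a ∈ X) (i : Fin q) :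
    clarke X (fun x => f x i) a =
      (fun u => (EuclideanSpace.proj i).comp u) '' clarke X f a := by
  have hf : LipschitzOnWith ⟨L, hL.le⟩ f X :=
    lipschitzOnWith_iff_norm_sub_le.2 fun x hx y hy => hLip x hx y hy
  exact stmt_4_general (hXopen.mem_nhds ha) (hXopen.mem_nhds ha) hf (EuclideanSpace.proj i)
end

section
/- Let X_n ⊂ ℝ^p be a sequence of closed sets converging in the Painlevé–Kuratowski sense to a nonempty closed set X ⊂ ℝ^p. Then the metric projection multifunctions P_{X_n} converge graphically to P_X, i.e. the graphs {(x, y) : y ∈ P_{X_n}(x)} converge in the Painlevé–Kuratowski sense to the graph {(x, y) : y ∈ P_X(x)}. -/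
open Filter Topology Metric MeasureTheory

/-- The set of nearest points to `x` in `A`. -/
def nearestPts {α : Type*} [MetricSpace α] (A : Set α) (x : α) : Set α :=
  {a ∈ A | dist x a = infDist x A}

/-!
A limit of nearest points is a nearest point, which bounds the upper limit of the graphs. For the
lower limit, let `y` be nearest to `x` in `X`. In a strictly convex space, moving `x` slightly
towards `y` yields a point `w` whose only nearest point in `X` is `y`. Nearest points to `w` in
`X_n` stay bounded, and all their cluster points are nearest to `w` in `X`, so they converge to `y`.
Hence `(w, y)` lies in the lower limit of the graphs, which is closed; now let `w` tend to `x`.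
-/

section KuratowskiLimits

variable {α : Type*} [TopologicalSpace α] {A : ℕ → Set α} {L : Set α}

theorem kLiminf_subset_kLimsup : KLiminf A ⊆ KLimsup A :=
  fun _ ⟨u, hu, hux⟩ => ⟨id, strictMono_id, u, hu, hux⟩

theorem KConv.of_subset (hsup : KLimsup A ⊆ L) (hinf : L ⊆ KLiminf A) : KConv A L :=
  ⟨(kLiminf_subset_kLimsup.trans hsup).antisymm hinf,
    hsup.antisymm (hinf.trans kLiminf_subset_kLimsup)⟩

theorem mem_kLiminf_iff [FirstCountableTopology α] {x : α} :
    x ∈ KLiminf A ↔ (∀ n, (A n).Nonempty) ∧ ∀ U ∈ 𝓝 x, ∀ᶠ n in atTop, (U ∩ A n).Nonempty := by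
  constructor
  · rintro ⟨u, hu, hux⟩
    refine ⟨fun n => ⟨u n, hu n⟩, fun U hU => ?_⟩
    exact (hux.eventually_mem hU).mono fun n hn => ⟨u n, hn, hu n⟩
  · rintro ⟨hne, hA⟩
    obtain ⟨B, hB⟩ := (𝓝 x).exists_antitone_basis
    classical
    -- Pick `u n` in the smallest of `B 1, ..., B n` that `A n` meets: that index tends to infinity.
    let k (n : ℕ) : ℕ := Nat.findGreatest (fun m => (B m ∩ A n).Nonempty) n
    have hk (n : ℕ) : ∃ a ∈ A n, k n ≠ 0 → a ∈ B (k n) := by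
      by_cases h : k n = 0
      · exact (hne n).imp fun a ha => ⟨ha, fun h' => (h' h).elim⟩
      · exact (Nat.findGreatest_of_ne_zero rfl h).imp fun a ha => ⟨ha.2, fun _ => ha.1⟩
    choose u hu huB using hk
    refine ⟨u, hu, hB.tendsto_right_iff.2 fun m _ => ?_⟩
    filter_upwards [hA _ (hB.mem (m + 1)), eventually_ge_atTop (m + 1)] with n hn hmn
    have hmk : m + 1 ≤ k n := Nat.le_findGreatest hmn hn
    exact hB.antitone (by lia) (huB n (by lia))

theorem isClosed_kLiminf [FirstCountableTopology α] : IsClosed (KLiminf A) := by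
  refine isClosed_of_closure_subset fun x hx => mem_kLiminf_iff.2 ⟨?_, fun U hU => ?_⟩
  · obtain ⟨z, hz⟩ := closure_nonempty_iff.1 ⟨x, hx⟩
    exact (mem_kLiminf_iff.1 hz).1
  · obtain ⟨V, hVU, hV, hxV⟩ := mem_nhds_iff.1 hU
    obtain ⟨z, hzV, hz⟩ := mem_closure_iff.1 hx V hV hxV
    filter_upwards [(mem_kLiminf_iff.1 hz).2 V (hV.mem_nhds hzV)] with n hn
    exact hn.mono (Set.inter_subset_inter_left _ hVU)

end KuratowskiLimits

theorem mem_mgraph_univ {α β : Type*} {F : α → Set β} {q : α × β} :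
    q ∈ mgraph Set.univ F ↔ q.2 ∈ F q.1 :=
  and_iff_right (Set.mem_univ _)

section NearestPoints

variable {α : Type*} [MetricSpace α] {A : Set α} {x w y : α}

theorem mem_nearestPts_iff : y ∈ nearestPts A x ↔ y ∈ A ∧ ∀ a ∈ A, dist x y ≤ dist x a := by
  refine and_congr_right fun hy => ⟨fun h a ha => h ▸ infDist_le_dist_of_mem ha, fun h => ?_⟩
  exact ((le_infDist ⟨y, hy⟩).2 fun {a} => h a).antisymm (infDist_le_dist_of_mem hy)

theorem nearestPts_nonempty [ProperSpace α] (hA : IsClosed A) (hne : A.Nonempty) (x : α) :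
    (nearestPts A x).Nonempty :=
  (hA.exists_infDist_eq_dist hne x).imp fun _ ⟨ha, h⟩ => ⟨ha, h.symm⟩

theorem mem_nearestPts_of_dist_add_dist_eq (hy : y ∈ nearestPts A x)
    (hw : dist x w + dist w y = dist x y) : y ∈ nearestPts A w := by
  rw [mem_nearestPts_iff] at hy ⊢
  refine ⟨hy.1, fun a ha => le_of_add_le_add_left (a := dist x w) ?_⟩
  calc dist x w + dist w y = dist x y := hw
    _ ≤ dist x a := hy.2 a ha
    _ ≤ dist x w + dist w a := dist_triangle x w a

end NearestPoints

section StrictConvexSpace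

variable {V P : Type*} [NormedAddCommGroup V] [NormedSpace ℝ V] [StrictConvexSpace ℝ V]
  [MetricSpace P] [NormedAddTorsor V P]

theorem nearestPts_lineMap_eq_singleton {A : Set P} {x y : P} {t : ℝ} (hy : y ∈ nearestPts A x)
    (ht : t ∈ Set.Ioc (0 : ℝ) 1) : nearestPts A (AffineMap.lineMap x y t) = {y} := by
  set w := AffineMap.lineMap x y t with hw
  have hxw : dist x w = t * dist x y := by
    rw [hw, dist_left_lineMap, Real.norm_of_nonneg ht.1.le]
  have hwy : dist w y = (1 - t) * dist x y := by
    rw [hw, dist_lineMap_right, Real.norm_of_nonneg (sub_nonneg.2 ht.2)]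
  have hyw : y ∈ nearestPts A w := mem_nearestPts_of_dist_add_dist_eq hy (by linarith)
  refine Set.eq_singleton_iff_unique_mem.2 ⟨hyw, fun z hz => ?_⟩
  have hwz : dist w z = dist w y := hz.2.trans hyw.2.symm
  have hxz : dist x z = dist x y := by
    refine le_antisymm ?_ ((mem_nearestPts_iff.1 hy).2 z hz.1)
    linarith [dist_triangle x w z]
  -- The triangle inequality `dist x z ≤ dist x w + dist w z` is an equality, so strict convexity
  -- puts `z` on the ray from `x` through `w`.
  have hwxz : w = AffineMap.lineMap x z t :=
    eq_lineMap_of_dist_eq_mul_of_dist_eq_mul (by rw [hxw, hxz]) (by rw [hwz, hwy, hxz])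
  rw [hw, AffineMap.lineMap_apply, AffineMap.lineMap_apply, vadd_right_cancel_iff] at hwxz
  exact (vsub_left_injective x (smul_right_injective V ht.1.ne' hwxz)).symm

end StrictConvexSpace

section GraphicalConvergence

variable {α : Type*} [MetricSpace α] {Xs : ℕ → Set α} {X : Set α} {x y : α}

theorem kLimsup_mgraph_nearestPts_subset (hsup : KLimsup Xs ⊆ X) (hinf : X ⊆ KLiminf Xs) :
    KLimsup (fun n => mgraph Set.univ (nearestPts (Xs n))) ⊆ mgraph Set.univ (nearestPts X) := by
  rintro ⟨x, y⟩ ⟨φ, hφ, u, hu, hlim⟩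
  simp only [mem_mgraph_univ, mem_nearestPts_iff] at hu ⊢
  refine ⟨hsup ⟨φ, hφ, fun k => (u k).2, fun k => (hu k).1, hlim.snd_nhds⟩, fun a ha => ?_⟩
  obtain ⟨v, hv, hva⟩ := hinf ha
  exact le_of_tendsto_of_tendsto' (hlim.fst_nhds.dist hlim.snd_nhds)
    (hlim.fst_nhds.dist (hva.comp hφ.tendsto_atTop)) fun k => (hu k).2 _ (hv _)

theorem tendsto_of_mem_nearestPts [ProperSpace α] (hK : KConv Xs X) (hxy : nearestPts X x = {y})
    {q : ℕ → α} (hq : ∀ n, q n ∈ nearestPts (Xs n) x) : Tendsto q atTop (𝓝 y) := by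
  have hy : y ∈ nearestPts X x := hxy ▸ Set.mem_singleton y
  obtain ⟨v, hv, hvy⟩ := hK.1.ge hy.1
  obtain ⟨R, hR⟩ := (hvy.dist (tendsto_const_nhds (x := x))).bddAbove_range
  have hqR (n : ℕ) : q n ∈ closedBall x R :=
    calc dist (q n) x = dist x (q n) := dist_comm _ _
      _ ≤ dist x (v n) := (mem_nearestPts_iff.1 (hq n)).2 _ (hv n)
      _ = dist (v n) x := dist_comm _ _
      _ ≤ R := hR ⟨n, rfl⟩
  refine (isCompact_closedBall x R).tendsto_nhds_of_unique_mapClusterPt (.of_forall hqR)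
    fun z _ hz => ?_
  obtain ⟨φ, hφ, hqz⟩ := hz.tendsto_subseq
  have hxz : (x, z) ∈ mgraph Set.univ (nearestPts X) :=
    kLimsup_mgraph_nearestPts_subset hK.2.le hK.1.ge
      ⟨φ, hφ, fun k => (x, q (φ k)), fun k => mem_mgraph_univ.2 (hq _),
        tendsto_const_nhds.prodMk_nhds hqz⟩
  exact hxy.subset (mem_mgraph_univ.1 hxz)

theorem mk_mem_kLiminf_mgraph_nearestPts [ProperSpace α] (hXs : ∀ n, IsClosed (Xs n))
    (hK : KConv Xs X) (hxy : nearestPts X x = {y}) :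
    (x, y) ∈ KLiminf (fun n => mgraph Set.univ (nearestPts (Xs n))) := by
  have hy : y ∈ nearestPts X x := hxy ▸ Set.mem_singleton y
  obtain ⟨v, hv, -⟩ := hK.1.ge hy.1
  choose q hq using fun n => nearestPts_nonempty (hXs n) ⟨v n, hv n⟩ x
  exact ⟨fun n => (x, q n), fun n => mem_mgraph_univ.2 (hq n),
    tendsto_const_nhds.prodMk_nhds (tendsto_of_mem_nearestPts hK hxy hq)⟩

end GraphicalConvergence

theorem stmt_9_general {V P : Type*} [NormedAddCommGroup V] [NormedSpace ℝ V]
    [StrictConvexSpace ℝ V] [MetricSpace P] [NormedAddTorsor V P] [ProperSpace P]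
    {Xs : ℕ → Set P} {X : Set P} (hXs : ∀ n, IsClosed (Xs n)) (hK : KConv Xs X) :
    KConv (fun n => mgraph Set.univ (nearestPts (Xs n))) (mgraph Set.univ (nearestPts X)) := by
  refine .of_subset (kLimsup_mgraph_nearestPts_subset hK.2.le hK.1.ge) fun ⟨x, y⟩ hxy => ?_
  have hy : y ∈ nearestPts X x := mem_mgraph_univ.1 hxy
  have hlim : Tendsto (fun t : ℝ => (AffineMap.lineMap x y t, y)) (𝓝[>] 0) (𝓝 (x, y)) := by
    have hcont : Continuous fun t : ℝ => (AffineMap.lineMap x y t, y) := by fun_prop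
    simpa using (hcont.tendsto 0).mono_left nhdsWithin_le_nhds
  refine isClosed_kLiminf.mem_of_tendsto hlim ?_
  filter_upwards [Ioc_mem_nhdsGT zero_lt_one] with t ht
  exact mk_mem_kLiminf_mgraph_nearestPts hXs hK (nearestPts_lineMap_eq_singleton hy ht)

/-- if closed sets `X_n ⊆ ℝ^p` converge to a nonempty closed set `X` in
the Painlevé–Kuratowski sense, then the metric projections `P_{X_n}` converge
graphically to `P_X`. -/
theorem stmt_9 {p : ℕ} (Xs : ℕ → Set (EuclideanSpace ℝ (Fin p)))
    (hXs : ∀ n, IsClosed (Xs n))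
    (X : Set (EuclideanSpace ℝ (Fin p))) (hXne : X.Nonempty) (hXcl : IsClosed X)
    (hK : KConv Xs X) :
    KConv (fun n => mgraph Set.univ (nearestPts (Xs n)))
      (mgraph Set.univ (nearestPts X)) :=
  stmt_9_general hXs hK
end

section
/- Let x_1, …, x_k ∈ ℝ² with x_1, x_2, x_3 affinely independent. Assume that each of the segments [x_1, x_2], [x_2, x_3], [x_3, x_1] is locally Delaunay with respect to the system {x_1, …, x_k}, and that x_i ∉ conv{x_1, x_2, x_3} for all i = 4, …, k. Then there exist a ∈ ℝ² and r > 0 such that x_1, x_2, x_3 all lie on the sphere S(a, r) and the open ball B(a, r) is disjoint from {x_1, …, x_k}. -/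
open Metric

/-- A segment with endpoints `u, v` is locally Delaunay with respect to the system of
points `s` if there is a circle through `u` and `v` whose open disc contains no point
of `s`. -/
def LocallyDelaunay (s : Set (EuclideanSpace ℝ (Fin 2)))
    (u v : EuclideanSpace ℝ (Fin 2)) : Prop :=
  ∃ (a : EuclideanSpace ℝ (Fin 2)) (r : ℝ), 0 < r ∧
    dist u a = r ∧ dist v a = r ∧ ∀ z ∈ s, ¬ dist z a < r

/-!
If `c` and `s` are spheres, the power of a point with respect to `s` minus its power with respect
to `c` is an affine function of the point. Take for `c` the circumsphere of a simplex, for `s` an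
empty sphere through the facet opposite the `i`-th vertex `pᵢ`, and for `z` a point of the system
with barycentric coordinates `w`. The affine function vanishes at all vertices except possibly
`pᵢ`, so its value at `z` is `wᵢ` times its value at `pᵢ`, which is nonnegative. If `z` is inside
`c`, its value at `z` is positive, and therefore `wᵢ > 0`. Since this holds for every `i`, the
point `z` is interior to the simplex.
-/

open EuclideanGeometry

section Barycentric

lemma map_affineCombination_of_map_ne_eq_zero {ι k V P W : Type*} [Ring k] [AddCommGroup V]
    [Module k V] [AddTorsor V P] [AddCommGroup W] [Module k W] (f : P →ᵃ[k] W) {t : Finset ι}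
    {p : ι → P} {w : ι → k} (hw : ∑ j ∈ t, w j = 1) {i : ι} (hi : i ∈ t)
    (hf : ∀ j ∈ t, j ≠ i → f (p j) = 0) :
    f (t.affineCombination k p w) = w i • f (p i) := by
  rw [t.map_affineCombination p w hw f, t.affineCombination_eq_linear_combination _ _ hw]
  exact Finset.sum_eq_single_of_mem i hi fun j hj hji => by simp [hf j hj hji]

lemma affineCombination_mem_interior_of_pos {k V P : Type*} [Ring k] [PartialOrder k]
    [IsOrderedAddMonoid k] [AddCommGroup V] [Module k V] [AddTorsor V P] {n : ℕ} [NeZero n]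
    (T : Affine.Simplex k P n) {w : Fin (n + 1) → k} (hw : ∑ i, w i = 1) (hpos : ∀ i, 0 < w i) :
    Finset.univ.affineCombination k T.points w ∈ T.interior := by
  rw [Affine.Simplex.affineCombination_mem_interior_iff hw]
  refine fun i => ⟨hpos i, ?_⟩
  obtain ⟨j, hji⟩ := exists_ne i
  rw [← hw]
  exact Finset.single_lt_sum hji (Finset.mem_univ i) (Finset.mem_univ j) (hpos j)
    fun l _ _ => (hpos l).le

end Barycentric

/-- A set `F`, thought of as the vertex set of a face, is *Delaunay* with respect to the system of
points `S` if some sphere of positive radius passes through `F` and has no point of `S` in its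
open ball. -/
def IsDelaunay {P : Type*} [MetricSpace P] (S F : Set P) : Prop :=
  ∃ s : Sphere P, 0 < s.radius ∧ F ⊆ s ∧ ∀ z ∈ S, s.radius ≤ dist z s.center

section Euclidean

variable {V P : Type*} [NormedAddCommGroup V] [InnerProductSpace ℝ V] [MetricSpace P]
  [NormedAddTorsor V P]

/-- The power of a point with respect to `s` minus its power with respect to `c`, bundled as an
affine map. For spheres with distinct centers its zero set is their radical hyperplane. -/
noncomputable def powerSub (s c : Sphere P) : P →ᵃ[ℝ] ℝ where
  toFun p := s.power p - c.power p
  linear := (2 : ℝ) • innerₗ V (c.center -ᵥ s.center)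
  map_vadd' p v := by
    have dist_vadd_sq (o : P) :
        dist (v +ᵥ p) o ^ 2 = ‖v‖ ^ 2 + 2 * inner ℝ (p -ᵥ o) v + dist p o ^ 2 := by
      rw [dist_eq_norm_vsub V, dist_eq_norm_vsub V, vadd_vsub_assoc, norm_add_sq_real,
        real_inner_comm]
    have inner_centers : inner ℝ (c.center -ᵥ s.center) v =
        inner ℝ (p -ᵥ s.center) v - inner ℝ (p -ᵥ c.center) v := by
      rw [← inner_sub_left, vsub_sub_vsub_cancel_left]
    simp only [Sphere.power, dist_vadd_sq, LinearMap.smul_apply, innerₗ_apply_apply, inner_centers,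
      smul_eq_mul, vadd_eq_add]
    ring

lemma powerSub_apply (s c : Sphere P) (p : P) : powerSub s c p = s.power p - c.power p := rfl

lemma weight_pos_of_power_neg_of_power_nonneg {ι : Type*} {t : Finset ι} {p : ι → P} {w : ι → ℝ}
    (hw : ∑ j ∈ t, w j = 1) {i : ι} (hi : i ∈ t) {s c : Sphere P}
    (hc : ∀ j ∈ t, c.power (p j) = 0) (hs : ∀ j ∈ t, j ≠ i → s.power (p j) = 0)
    (hsi : 0 ≤ s.power (p i)) (hcz : c.power (t.affineCombination ℝ p w) < 0)
    (hsz : 0 ≤ s.power (t.affineCombination ℝ p w)) : 0 < w i := by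
  have powerSub_eq_zero (j) (hj : j ∈ t) (hji : j ≠ i) : powerSub s c (p j) = 0 := by
    rw [powerSub_apply, hs j hj hji, hc j hj, sub_zero]
  have powerSub_eq : powerSub s c (t.affineCombination ℝ p w) = w i * s.power (p i) := by
    rw [map_affineCombination_of_map_ne_eq_zero _ hw hi powerSub_eq_zero, powerSub_apply, hc i hi,
      sub_zero, smul_eq_mul]
  have powerSub_pos : 0 < powerSub s c (t.affineCombination ℝ p w) :=
    sub_pos.2 (hcz.trans_le hsz)
  exact pos_of_mul_pos_left (powerSub_eq ▸ powerSub_pos) hsi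

lemma mem_interior_of_dist_circumcenter_lt {n : ℕ} [NeZero n] (T : Affine.Simplex ℝ P n)
    {S : Set P} (hvert : Set.range T.points ⊆ S)
    (hface : ∀ i, IsDelaunay S (Set.range (T.faceOpposite i).points)) {z : P} (hzS : z ∈ S)
    (hzspan : z ∈ affineSpan ℝ (Set.range T.points))
    (hz : dist z T.circumcenter < T.circumradius) : z ∈ T.interior := by
  obtain ⟨w, hw, rfl⟩ := eq_affineCombination_of_mem_affineSpan_of_fintype hzspan
  refine affineCombination_mem_interior_of_pos T hw fun i => ?_
  obtain ⟨s, hr, hfacet, hempty⟩ := hface i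
  rw [T.range_faceOpposite_points] at hfacet
  have power_nonneg {y : P} (hy : y ∈ S) : 0 ≤ s.power y :=
    (Sphere.power_nonneg_iff_radius_le_dist_center hr.le).2 (hempty y hy)
  have power_facet (j) (hj : j ≠ i) : s.power (T.points j) = 0 :=
    (Sphere.power_eq_zero_iff_mem_sphere hr.le).2 (hfacet ⟨j, hj, rfl⟩)
  have power_circumsphere (j) : T.circumsphere.power (T.points j) = 0 :=
    (Sphere.power_eq_zero_iff_mem_sphere T.circumradius_nonneg).2 (T.mem_circumsphere j)
  exact weight_pos_of_power_neg_of_power_nonneg hw (Finset.mem_univ i)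
    (fun j _ => power_circumsphere j) (fun j _ => power_facet j) (power_nonneg (hvert ⟨i, rfl⟩))
    ((Sphere.power_neg_iff_dist_center_lt_radius T.circumradius_nonneg).2 hz) (power_nonneg hzS)

theorem stmt_12_general {n : ℕ} (T : Affine.Simplex ℝ P (n + 1)) {S : Set P}
    (hvert : Set.range T.points ⊆ S) (hspan : S ⊆ affineSpan ℝ (Set.range T.points))
    (hface : ∀ i, IsDelaunay S (Set.range (T.faceOpposite i).points))
    (hout : Disjoint S T.interior) : IsDelaunay S (Set.range T.points) := by
  refine ⟨T.circumsphere, T.circumradius_pos, Set.range_subset_iff.2 T.mem_circumsphere, ?_⟩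
  intro z hzS
  by_contra! hz
  exact hout.notMem_of_mem_left hzS
    (mem_interior_of_dist_circumcenter_lt T hvert hface hzS (hspan hzS) hz)

end Euclidean

lemma LocallyDelaunay.isDelaunay_of_subset {S F : Set (EuclideanSpace ℝ (Fin 2))}
    {u v : EuclideanSpace ℝ (Fin 2)} (h : LocallyDelaunay S u v) (hF : F ⊆ {u, v}) :
    IsDelaunay S F := by
  obtain ⟨a, r, hr, hu, hv, hempty⟩ := h
  exact ⟨⟨a, r⟩, hr, hF.trans (Set.pair_subset hu hv), fun z hz => not_lt.1 (hempty z hz)⟩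

lemma isDelaunay_triangle {S : Set (EuclideanSpace ℝ (Fin 2))} {u v w : EuclideanSpace ℝ (Fin 2)}
    (hind : AffineIndependent ℝ ![u, v, w]) (hvert : {u, v, w} ⊆ S) (huv : LocallyDelaunay S u v)
    (hvw : LocallyDelaunay S v w) (hwu : LocallyDelaunay S w u)
    (hout : S ∩ convexHull ℝ {u, v, w} ⊆ {u, v, w}) : IsDelaunay S {u, v, w} := by
  let T : Affine.Simplex ℝ (EuclideanSpace ℝ (Fin 2)) 2 := ⟨![u, v, w], hind⟩
  have hrange : Set.range T.points = {u, v, w} := by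
    rw [Matrix.range_cons, Matrix.range_cons_cons_empty, Set.singleton_union]
  have hspan : affineSpan ℝ (Set.range T.points) = ⊤ :=
    hind.affineSpan_eq_top_iff_card_eq_finrank_add_one.2 (by simp)
  have hface (j : Fin 3) : IsDelaunay S (Set.range (T.faceOpposite j).points) := by
    rw [T.range_faceOpposite_points]
    fin_cases j
    · exact hvw.isDelaunay_of_subset
        (Set.image_subset_iff.2 fun l hl => by fin_cases l <;> simp_all [T])
    · exact hwu.isDelaunay_of_subset
        (Set.image_subset_iff.2 fun l hl => by fin_cases l <;> simp_all [T])
    · exact huv.isDelaunay_of_subset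
        (Set.image_subset_iff.2 fun l hl => by fin_cases l <;> simp_all [T])
  have hdisj : Disjoint S T.interior := by
    rw [← hrange, T.convexHull_eq_closedInterior] at hout
    rw [Set.disjoint_left]
    intro z hzS hz
    obtain ⟨j, rfl⟩ := hout ⟨hzS, T.interior_subset_closedInterior hz⟩
    exact T.point_notMem_interior j hz
  rw [← hrange] at hvert ⊢
  exact stmt_12_general T hvert (by simp [hspan]) hface hdisj

/-- given points `x_1, …, x_k` in the plane with `x_1, x_2, x_3` affinely
independent, if the three segments `[x_1,x_2]`, `[x_2,x_3]`, `[x_3,x_1]` are locally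
Delaunay with respect to the system and no other point of the system lies in
`conv{x_1,x_2,x_3}`, then there is a circle through `x_1, x_2, x_3` whose open disc
misses the whole system. -/
theorem stmt_12 {k : ℕ} (hk : 3 ≤ k) (x : Fin k → EuclideanSpace ℝ (Fin 2))
    (i₁ : Fin k) (i₂ : Fin k) (i₃ : Fin k)
    (hi₁ : (i₁ : ℕ) = 0) (hi₂ : (i₂ : ℕ) = 1) (hi₃ : (i₃ : ℕ) = 2)
    (hind : AffineIndependent ℝ ![x i₁, x i₂, x i₃])
    (h12 : LocallyDelaunay (Set.range x) (x i₁) (x i₂))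
    (h23 : LocallyDelaunay (Set.range x) (x i₂) (x i₃))
    (h31 : LocallyDelaunay (Set.range x) (x i₃) (x i₁))
    (hout : ∀ i : Fin k, 3 ≤ (i : ℕ) →
      x i ∉ convexHull ℝ ({x i₁, x i₂, x i₃} : Set (EuclideanSpace ℝ (Fin 2)))) :
    ∃ (a : EuclideanSpace ℝ (Fin 2)) (r : ℝ), 0 < r ∧
      dist (x i₁) a = r ∧ dist (x i₂) a = r ∧ dist (x i₃) a = r ∧
      ∀ i : Fin k, ¬ dist (x i) a < r := by
  have hvert : {x i₁, x i₂, x i₃} ⊆ Set.range x := by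
    simp [Set.insert_subset_iff]
  have hvertices : Set.range x ∩ convexHull ℝ {x i₁, x i₂, x i₃} ⊆ {x i₁, x i₂, x i₃} := by
    rintro _ ⟨⟨i, rfl⟩, hi⟩
    have hi_lt : (i : ℕ) < 3 := not_le.1 fun h => hout i h hi
    obtain rfl | rfl | rfl : i = i₁ ∨ i = i₂ ∨ i = i₃ := by grind
    all_goals simp
  obtain ⟨s, hr, hs, hempty⟩ := isDelaunay_triangle hind hvert h12 h23 h31 hvertices
  exact ⟨s.center, s.radius, hr, hs (by simp), hs (by simp), hs (by simp),
    fun i => (hempty _ ⟨i, rfl⟩).not_gt⟩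
end

section
/- Let p ≥ 2 and let {E_n} be a sequence of convex, compact subsets of ℝ^p. Assume that the boundaries F_n := ∂E_n converge in the Painlevé–Kuratowski sense to a nonempty compact set F ⊂ ℝ^p. Then the sets E_n converge in the Painlevé–Kuratowski sense to E := convexHull(F), and moreover ∂E = F. -/
/-!
*Boundedness.* Let `F ⊆ ball 0 R`. For large `n` the set `∂E_n` misses the sphere of radius `R` and
meets the ball. The sphere is connected, as the dimension is at least two, so it lies in `E_n` or
is disjoint from it. In the first case the whole ball lies in `E_n` by convexity, although `∂E_n`
meets it; hence the second case holds, and `E_n ⊆ ball 0 R`.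

*Limit of `E_n`.* `Liminf E_n` is closed, convex and contains `F`. Conversely, `∂E_n` eventually
lies in the `ε`-thickening of `F`. A bounded set is contained in the convex hull of its boundary,
so `E_n` eventually lies in the `ε`-thickening of `conv F`. Hence `E_n` converges to the closure
`C` of `conv F`.

*Boundary of the limit.* For convex sets, `E_n → C` implies `Limsup ∂E_n = ∂C`. Indeed, a small
ball that meets `C` and misses `∂E_n` for all large `n` is contained in these `E_n`, hence in `C`;
and the unit functionals supporting `E_n` at points of `∂E_n` accumulate at a functional supporting
`C`. So `∂C = F`, whence `C ⊆ conv ∂C = conv F`, that is, `conv F` is closed.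
-/

open Filter Topology Metric MeasureTheory

section TopologicalSpace

variable {α : Type*} [TopologicalSpace α] {A B : ℕ → Set α}

lemma KLiminf_subset_KLimsup (A : ℕ → Set α) : KLiminf A ⊆ KLimsup A :=
  fun _ ⟨u, hu, hx⟩ => ⟨id, strictMono_id, u, hu, hx⟩

lemma KLiminf_mono (h : ∀ n, A n ⊆ B n) : KLiminf A ⊆ KLiminf B :=
  fun _ ⟨u, hu, hx⟩ => ⟨u, fun n => h n (hu n), hx⟩

lemma KLimsup_mono (h : ∀ n, A n ⊆ B n) : KLimsup A ⊆ KLimsup B :=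
  fun _ ⟨φ, hφ, u, hu, hx⟩ => ⟨φ, hφ, u, fun n => h (φ n) (hu n), hx⟩

lemma KConv_of_subset {L : Set α} (hinf : L ⊆ KLiminf A) (hsup : KLimsup A ⊆ L) : KConv A L :=
  ⟨((KLiminf_subset_KLimsup A).trans hsup).antisymm hinf,
    hsup.antisymm (hinf.trans (KLiminf_subset_KLimsup A))⟩

lemma subset_KLimsup_of_eventually_subset {s : Set α} (h : ∀ᶠ n in atTop, s ⊆ A n) :
    s ⊆ KLimsup A := by
  obtain ⟨φ, hφ, hs⟩ := extraction_of_eventually_atTop h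
  exact fun x hx => ⟨φ, hφ, fun _ => x, fun n => hs n hx, tendsto_const_nhds⟩

lemma KLimsup_subset_of_eventually_subset {s : Set α} (hs : IsClosed s)
    (h : ∀ᶠ n in atTop, A n ⊆ s) : KLimsup A ⊆ s := by
  rintro x ⟨φ, hφ, u, hu, hx⟩
  exact hs.mem_of_tendsto hx
    ((hφ.tendsto_atTop.eventually h).mono fun k hk => hk (hu k))

lemma eventually_inter_nonempty_of_mem_KLiminf {x : α} {U : Set α} (hx : x ∈ KLiminf A)
    (hU : U ∈ 𝓝 x) : ∀ᶠ n in atTop, (A n ∩ U).Nonempty := by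
  obtain ⟨u, hu, hux⟩ := hx
  exact (hux.eventually_mem hU).mono fun n hn => ⟨u n, hu n, hn⟩

section FirstCountableTopology

variable [FirstCountableTopology α]

lemma mem_KLimsup_of_frequently_inter_nonempty {x : α}
    (h : ∀ U ∈ 𝓝 x, ∃ᶠ n in atTop, (A n ∩ U).Nonempty) : x ∈ KLimsup A := by
  obtain ⟨U, hU⟩ := (𝓝 x).exists_antitone_basis
  obtain ⟨φ, hφ, hAU⟩ := extraction_forall_of_frequently fun k => h (U k) (hU.mem k)
  choose u huA huU using hAU
  exact ⟨φ, hφ, u, huA, hU.tendsto huU⟩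

lemma KLimsup_inter_nonempty_of_frequently {K : Set α} (hK : IsCompact K)
    (h : ∃ᶠ n in atTop, (A n ∩ K).Nonempty) : (KLimsup A ∩ K).Nonempty := by
  obtain ⟨φ, hφ, hAK⟩ := extraction_of_frequently_atTop h
  choose u huA huK using hAK
  obtain ⟨x, hx, ψ, hψ, hux⟩ := hK.tendsto_subseq huK
  exact ⟨x, ⟨φ ∘ ψ, hφ.comp hψ, u ∘ ψ, fun n => huA (ψ n), hux⟩, hx⟩

lemma eventually_disjoint_of_disjoint_KLimsup {K : Set α} (hK : IsCompact K)
    (h : Disjoint (KLimsup A) K) : ∀ᶠ n in atTop, Disjoint (A n) K := by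
  contrapose! h
  simp only [Set.not_disjoint_iff_nonempty_inter] at h ⊢
  exact KLimsup_inter_nonempty_of_frequently hK h

lemma eventually_subset_of_KLimsup_subset {K U : Set α} (hK : IsCompact K) (hU : IsOpen U)
    (hAK : ∀ᶠ n in atTop, A n ⊆ K) (hAU : KLimsup A ⊆ U) : ∀ᶠ n in atTop, A n ⊆ U := by
  have hdisj : Disjoint (KLimsup A) (K \ U) := Set.disjoint_sdiff_right.mono_left hAU
  filter_upwards [hAK, eventually_disjoint_of_disjoint_KLimsup (hK.diff hU) hdisj] with n hnK hnd
  intro x hx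
  by_contra hxU
  exact Set.disjoint_left.1 hnd hx ⟨hnK hx, hxU⟩

end FirstCountableTopology

lemma subset_of_isPreconnected_of_disjoint_frontier {s E : Set α} (hs : IsPreconnected s)
    (hd : Disjoint s (frontier E)) (hne : (s ∩ E).Nonempty) : s ⊆ E := by
  have hcover : s ⊆ interior E ∪ interior Eᶜ := by
    rw [← compl_frontier_eq_union_interior]
    exact hd.subset_compl_right
  have hopen : Disjoint (interior E) (interior Eᶜ) :=
    disjoint_compl_right.mono interior_subset interior_subset
  rcases hs.subset_or_subset isOpen_interior isOpen_interior hopen hcover with hE | hEc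
  · exact hE.trans interior_subset
  · obtain ⟨x, hxs, hxE⟩ := hne
    exact absurd hxE (interior_subset (hEc hxs))

end TopologicalSpace

section PseudoMetricSpace

variable {α : Type*} [PseudoMetricSpace α] {A : ℕ → Set α}

lemma mem_KLiminf_iff_tendsto_infDist {x : α} :
    x ∈ KLiminf A ↔
      (∀ n, (A n).Nonempty) ∧ Tendsto (fun n => infDist x (A n)) atTop (𝓝 0) := by
  constructor
  · rintro ⟨u, hu, hux⟩
    refine ⟨fun n => ⟨u n, hu n⟩, squeeze_zero (fun _ => infDist_nonneg)
      (fun n => infDist_le_dist_of_mem (hu n)) ?_⟩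
    simpa only [dist_comm] using tendsto_iff_dist_tendsto_zero.1 hux
  · rintro ⟨hne, hlim⟩
    have hnear : ∀ n : ℕ, ∃ y ∈ A n, dist x y < infDist x (A n) + 1 / ((n : ℝ) + 1) := fun n =>
      (infDist_lt_iff (hne n)).1 (lt_add_of_pos_right _ Nat.one_div_pos_of_nat)
    choose u huA hux using hnear
    refine ⟨u, huA, tendsto_iff_dist_tendsto_zero.2 (squeeze_zero (fun _ => dist_nonneg)
      (fun n => (dist_comm (u n) x).trans_le (hux n).le) ?_)⟩
    simpa only [add_zero] using hlim.add tendsto_one_div_add_atTop_nhds_zero_nat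

lemma KLiminf_closure (A : ℕ → Set α) : KLiminf (fun n => closure (A n)) = KLiminf A := by
  ext x
  simp only [mem_KLiminf_iff_tendsto_infDist, closure_nonempty_iff, infDist_closure]

lemma isClosed_KLiminf (A : ℕ → Set α) : IsClosed (KLiminf A) := by
  refine isClosed_of_closure_subset fun x hx => ?_
  simp only [Metric.mem_closure_iff, mem_KLiminf_iff_tendsto_infDist] at hx ⊢
  obtain ⟨-, ⟨hne, -⟩, -⟩ := hx 1 one_pos
  refine ⟨hne, tendsto_order.2 ⟨fun a ha => .of_forall fun n => ha.trans_le infDist_nonneg,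
    fun ε hε => ?_⟩⟩
  obtain ⟨y, ⟨-, hy⟩, hxy⟩ := hx (ε / 2) (half_pos hε)
  filter_upwards [hy.eventually_lt_const (half_pos hε)] with n hn
  linarith [infDist_le_infDist_add_dist (x := x) (y := y) (s := A n)]

lemma KLiminf_frontier_subset_KLiminf (E : ℕ → Set α) :
    KLiminf (fun n => frontier (E n)) ⊆ KLiminf E :=
  (KLiminf_mono fun _ => frontier_subset_closure).trans (KLiminf_closure E).subset

lemma KLimsup_frontier_subset_KLimsup (E : ℕ → Set α) :
    (KLimsup fun n => frontier (E n)) ⊆ KLimsup E :=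
  fun _ ⟨φ, hφ, hx⟩ => ⟨φ, hφ, KLiminf_frontier_subset_KLiminf (E ∘ φ) hx⟩

end PseudoMetricSpace

lemma KConv.frontier_subset_KLimsup_frontier {α : Type*} [PseudoMetricSpace α]
    [LocallyConnectedSpace α] {E : ℕ → Set α} {L : Set α} (hE : KConv E L) :
    frontier L ⊆ KLimsup fun n => frontier (E n) := by
  intro x hx
  refine mem_KLimsup_of_frequently_inter_nonempty fun U hU => ?_
  by_contra hmiss
  obtain ⟨V, hVU, hVopen, hxV, hVconn⟩ :=
    locallyConnectedSpace_iff_subsets_isOpen_isConnected.1 inferInstance x U hU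
  have hxE : x ∈ KLiminf E := by
    rw [← (isClosed_KLiminf E).closure_eq, hE.1]
    exact frontier_subset_closure hx
  have hVE : ∀ᶠ n in atTop, V ⊆ E n := by
    filter_upwards [not_frequently.1 hmiss,
      eventually_inter_nonempty_of_mem_KLiminf hxE (hVopen.mem_nhds hxV)] with n hn hmeet
    refine subset_of_isPreconnected_of_disjoint_frontier hVconn.isPreconnected ?_
      (Set.inter_comm _ _ ▸ hmeet)
    rw [← Set.not_disjoint_iff_nonempty_inter, not_not] at hn
    exact hn.symm.mono_left hVU
  have hVL : V ⊆ L := (subset_KLimsup_of_eventually_subset hVE).trans hE.2.subset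
  exact hx.2 (interior_maximal hVL hVopen hxV)

lemma convex_KLiminf {V : Type*} [AddCommGroup V] [Module ℝ V] [TopologicalSpace V]
    [ContinuousAdd V] [ContinuousConstSMul ℝ V] {A : ℕ → Set V} (h : ∀ n, Convex ℝ (A n)) :
    Convex ℝ (KLiminf A) := by
  rintro x ⟨u, hu, hx⟩ y ⟨v, hv, hy⟩ a b ha hb hab
  exact ⟨fun n => a • u n + b • v n, fun n => h n (hu n) (hv n) ha hb hab,
    (hx.const_smul a).add (hy.const_smul b)⟩

section NormedSpace

variable {V : Type*} [NormedAddCommGroup V] [NormedSpace ℝ V]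

lemma exists_nonneg_add_smul_mem_frontier {C : Set V} (hC : Bornology.IsBounded C) {x v : V}
    (hx : x ∈ C) (hv : v ≠ 0) : ∃ t : ℝ, 0 ≤ t ∧ x + t • v ∈ frontier C := by
  by_contra! hmiss
  have hray : IsPreconnected ((fun t : ℝ => x + t • v) '' Set.Ici 0) :=
    isPreconnected_Ici.image _ (by fun_prop)
  have hsub : (fun t : ℝ => x + t • v) '' Set.Ici 0 ⊆ C := by
    refine subset_of_isPreconnected_of_disjoint_frontier hray ?_
      ⟨x, ⟨0, Set.self_mem_Ici, by simp⟩, hx⟩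
    rw [Set.disjoint_left]
    rintro _ ⟨t, ht, rfl⟩
    exact hmiss t ht
  obtain ⟨R, hR⟩ := hC.subset_ball x
  have hR0 : 0 < R := pos_of_mem_ball (hR hx)
  have hmem : x + (R / ‖v‖) • v ∈ ball x R :=
    hR (hsub ⟨R / ‖v‖, by simp only [Set.mem_Ici]; positivity, rfl⟩)
  rw [mem_ball, dist_self_add_left, norm_smul, norm_div, norm_norm,
    div_mul_cancel₀ _ (norm_ne_zero_iff.2 hv), Real.norm_of_nonneg hR0.le] at hmem
  exact lt_irrefl R hmem

lemma subset_convexHull_frontier [Nontrivial V] {C : Set V} (hC : Bornology.IsBounded C) :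
    C ⊆ convexHull ℝ (frontier C) := by
  intro x hx
  obtain ⟨v, hv⟩ := exists_ne (0 : V)
  obtain ⟨t, ht, hxt⟩ := exists_nonneg_add_smul_mem_frontier hC hx hv
  obtain ⟨s, hs, hxs⟩ := exists_nonneg_add_smul_mem_frontier hC hx (neg_ne_zero.2 hv)
  refine segment_subset_convexHull hxs hxt (mem_segment_iff_sameRay.2 ?_)
  simpa using ((SameRay.refl v).nonneg_smul_left hs).nonneg_smul_right ht

lemma subset_ball_of_disjoint_frontier_sphere (hV : 1 < Module.rank ℝ V) {E : Set V}
    (hE : Convex ℝ E) {c : V} {R : ℝ} (hd : Disjoint (frontier E) (sphere c R))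
    (hne : (frontier E ∩ ball c R).Nonempty) : E ⊆ ball c R := by
  have : Nontrivial V := rank_pos_iff_nontrivial.1 (zero_lt_one.trans hV)
  obtain ⟨a, haE, haR⟩ := hne
  by_cases hmeet : (sphere c R ∩ E).Nonempty
  · have hsphere : sphere c R ⊆ E :=
      subset_of_isPreconnected_of_disjoint_frontier (isPreconnected_sphere hV c R) hd.symm hmeet
    have hball : ball c R ⊆ E := by
      refine ball_subset_closedBall.trans ?_
      rw [← convexHull_sphere_eq_closedBall c (pos_of_mem_ball haR).le]
      exact convexHull_min hsphere hE
    exact absurd (interior_maximal hball isOpen_ball haR) haE.2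
  · refine subset_of_isPreconnected_of_disjoint_frontier hE.isPreconnected ?_ ?_
    · rw [← Set.not_disjoint_iff_nonempty_inter, not_not] at hmeet
      exact hmeet.symm.mono_right frontier_ball_subset_sphere
    · rw [Set.inter_comm]
      exact mem_closure_iff.1 (frontier_subset_closure haE) _ isOpen_ball haR

section ProperSpace

variable [ProperSpace V] {E : ℕ → Set V}

lemma eventually_subset_ball_of_KLimsup_frontier_subset_ball (hV : 1 < Module.rank ℝ V)
    (hE : ∀ n, Convex ℝ (E n)) (hinf : (KLiminf fun n => frontier (E n)).Nonempty) {c : V} {R : ℝ}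
    (hsup : (KLimsup fun n => frontier (E n)) ⊆ ball c R) : ∀ᶠ n in atTop, E n ⊆ ball c R := by
  obtain ⟨x, hx⟩ := hinf
  have hxR : ball c R ∈ 𝓝 x := isOpen_ball.mem_nhds (hsup (KLiminf_subset_KLimsup _ hx))
  filter_upwards [eventually_disjoint_of_disjoint_KLimsup (isCompact_sphere c R)
      (sphere_disjoint_ball.symm.mono_left hsup),
    eventually_inter_nonempty_of_mem_KLiminf hx hxR] with n hnd hnmeet
  exact subset_ball_of_disjoint_frontier_sphere hV (hE n) hnd hnmeet

lemma KLimsup_subset_closure_convexHull_KLimsup_frontier [Nontrivial V] {B : Set V}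
    (hB : Bornology.IsBounded B) (hEB : ∀ᶠ n in atTop, E n ⊆ B) :
    KLimsup E ⊆ closure (convexHull ℝ (KLimsup fun n => frontier (E n))) := by
  set F := KLimsup fun n => frontier (E n)
  rw [closure_eq_iInter_cthickening]
  refine Set.subset_iInter₂ fun ε hε =>
    KLimsup_subset_of_eventually_subset isClosed_cthickening ?_
  have hfr : ∀ᶠ n in atTop, frontier (E n) ⊆ thickening ε F :=
    eventually_subset_of_KLimsup_subset hB.isCompact_closure isOpen_thickening
      (hEB.mono fun n hn => frontier_subset_closure.trans (closure_mono hn))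
      (self_subset_thickening hε F)
  filter_upwards [hEB, hfr] with n hnB hn
  calc E n ⊆ convexHull ℝ (frontier (E n)) := subset_convexHull_frontier (hB.subset hnB)
    _ ⊆ thickening ε (convexHull ℝ F) :=
      convexHull_min (hn.trans (thickening_subset_of_subset ε (subset_convexHull ℝ F)))
        ((convex_convexHull ℝ F).thickening ε)
    _ ⊆ cthickening ε (convexHull ℝ F) := thickening_subset_cthickening ε _

lemma KConv_closure_convexHull_of_KConv_frontier (hV : 1 < Module.rank ℝ V)
    (hE : ∀ n, Convex ℝ (E n)) {F : Set V} (hF : Bornology.IsBounded F) (hFne : F.Nonempty)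
    (hK : KConv (fun n => frontier (E n)) F) : KConv E (closure (convexHull ℝ F)) := by
  have : Nontrivial V := rank_pos_iff_nontrivial.1 (zero_lt_one.trans hV)
  obtain ⟨R, hR⟩ := hF.subset_ball 0
  have hER : ∀ᶠ n in atTop, E n ⊆ ball 0 R :=
    eventually_subset_ball_of_KLimsup_frontier_subset_ball hV hE (hK.1 ▸ hFne) (hK.2 ▸ hR)
  have hFE : F ⊆ KLiminf E := hK.1 ▸ KLiminf_frontier_subset_KLiminf E
  exact KConv_of_subset
    (closure_minimal (convexHull_min hFE (convex_KLiminf hE)) (isClosed_KLiminf E))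
    (hK.2 ▸ KLimsup_subset_closure_convexHull_KLimsup_frontier isBounded_ball hER)

end ProperSpace

lemma notMem_interior_of_forall_le {s : Set V} {x : V} {f : StrongDual ℝ V} (hf : f ≠ 0)
    (h : ∀ y ∈ s, f y ≤ f x) : x ∉ interior s := by
  intro hx
  have hmax : IsLocalMax f x := mem_of_superset (mem_interior_iff_mem_nhds.1 hx) h
  exact hf (hmax.hasFDerivAt_eq_zero f.hasFDerivAt)

section FiniteDimensional

variable [FiniteDimensional ℝ V]

lemma exists_ne_zero_forall_le_of_interior_eq_empty {E : Set V} (hE : Convex ℝ E)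
    (hne : E.Nonempty) (hint : interior E = ∅) (x : V) :
    ∃ f : StrongDual ℝ V, f ≠ 0 ∧ ∀ y ∈ E, f y ≤ f x := by
  obtain ⟨a, ha⟩ := hne
  have hdir : (affineSpan ℝ E).direction < ⊤ := by
    rw [lt_top_iff_ne_top, Ne, AffineSubspace.direction_eq_top_iff_of_nonempty
      ⟨a, subset_affineSpan ℝ E ha⟩, ← hE.interior_nonempty_iff_affineSpan_eq_top]
    exact Set.not_nonempty_iff_eq_empty.2 hint
  obtain ⟨f, hf, hker⟩ := Submodule.exists_le_ker_of_lt_top _ hdir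
  have hconst : ∀ y ∈ E, f y = f a := fun y hy => by
    rw [← sub_eq_zero, ← map_sub]
    exact hker (AffineSubspace.vsub_mem_direction (subset_affineSpan ℝ E hy)
      (subset_affineSpan ℝ E ha))
  have hf' : LinearMap.toContinuousLinearMap f ≠ 0 :=
    (map_ne_zero_iff _ LinearMap.toContinuousLinearMap.injective).2 hf
  rcases le_total (f a) (f x) with hax | hxa
  · exact ⟨LinearMap.toContinuousLinearMap f, hf', fun y hy => (hconst y hy).trans_le hax⟩
  · exact ⟨-LinearMap.toContinuousLinearMap f, neg_ne_zero.2 hf',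
      fun y hy => neg_le_neg (hxa.trans_eq (hconst y hy).symm)⟩

lemma exists_norm_eq_one_forall_le_of_notMem_interior {E : Set V} (hE : Convex ℝ E)
    (hne : E.Nonempty) {x : V} (hx : x ∉ interior E) :
    ∃ f : StrongDual ℝ V, ‖f‖ = 1 ∧ ∀ y ∈ E, f y ≤ f x := by
  obtain ⟨f, hf, hle⟩ : ∃ f : StrongDual ℝ V, f ≠ 0 ∧ ∀ y ∈ E, f y ≤ f x := by
    rcases (interior E).eq_empty_or_nonempty with hint | hint
    · exact exists_ne_zero_forall_le_of_interior_eq_empty hE hne hint x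
    · exact geometric_hahn_banach_of_nonempty_interior_point hE hx hint
  exact ⟨‖f‖⁻¹ • f, norm_smul_inv_norm hf,
    fun y hy => mul_le_mul_of_nonneg_left (hle y hy) (inv_nonneg.2 (norm_nonneg f))⟩

lemma KLimsup_compl_interior_subset {E : ℕ → Set V} (hE : ∀ n, Convex ℝ (E n)) :
    (KLimsup fun n => (interior (E n))ᶜ) ⊆ (interior (KLiminf E))ᶜ := by
  rintro x ⟨φ, hφ, u, hu, hux⟩ hx
  have hne : ∀ n, (E n).Nonempty := by
    obtain ⟨v, hv, -⟩ := interior_subset hx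
    exact fun n => ⟨v n, hv n⟩
  choose f hf hle using fun n =>
    exists_norm_eq_one_forall_le_of_notMem_interior (hE (φ n)) (hne (φ n)) (hu n)
  obtain ⟨g, hg, ψ, hψ, hfg⟩ := (isCompact_sphere (0 : StrongDual ℝ V) 1).tendsto_subseq
    fun n => mem_sphere_zero_iff_norm.2 (hf n)
  have heval : Continuous fun p : StrongDual ℝ V × V => p.1 p.2 :=
    continuous_fst.clm_apply continuous_snd
  have hgx : ∀ y ∈ KLiminf E, g y ≤ g x := by
    rintro y ⟨v, hv, hvy⟩
    have hvy' : Tendsto (v ∘ φ ∘ ψ) atTop (𝓝 y) := hvy.comp (hφ.comp hψ).tendsto_atTop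
    have hux' : Tendsto (u ∘ ψ) atTop (𝓝 x) := hux.comp hψ.tendsto_atTop
    exact le_of_tendsto_of_tendsto' ((heval.tendsto (g, y)).comp (hfg.prodMk_nhds hvy'))
      ((heval.tendsto (g, x)).comp (hfg.prodMk_nhds hux')) fun k => hle (ψ k) _ (hv _)
  exact notMem_interior_of_forall_le (ne_zero_of_mem_unit_sphere ⟨g, hg⟩) hgx hx

theorem KConv.KLimsup_frontier_eq {E : ℕ → Set V} {L : Set V} (hE : ∀ n, Convex ℝ (E n))
    (hL : KConv E L) : (KLimsup fun n => frontier (E n)) = frontier L := by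
  refine Set.Subset.antisymm (fun x hx => ⟨?_, ?_⟩) hL.frontier_subset_KLimsup_frontier
  · exact subset_closure (hL.2 ▸ KLimsup_frontier_subset_KLimsup E hx)
  · rw [← hL.1]
    exact KLimsup_compl_interior_subset hE (KLimsup_mono (fun n y hy => hy.2) hx)

theorem stmt_17_general (hV : 1 < Module.rank ℝ V) (E : ℕ → Set V) (hconv : ∀ n, Convex ℝ (E n))
    (F : Set V) (hF : Bornology.IsBounded F) (hFne : F.Nonempty)
    (hK : KConv (fun n => frontier (E n)) F) :
    KConv E (convexHull ℝ F) ∧ frontier (convexHull ℝ F) = F := by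
  have : Nontrivial V := rank_pos_iff_nontrivial.1 (zero_lt_one.trans hV)
  have hE : KConv E (closure (convexHull ℝ F)) :=
    KConv_closure_convexHull_of_KConv_frontier hV hconv hF hFne hK
  have hfr : frontier (closure (convexHull ℝ F)) = F :=
    (hE.KLimsup_frontier_eq hconv).symm.trans hK.2
  have hcl : closure (convexHull ℝ F) = convexHull ℝ F := by
    refine Set.Subset.antisymm ?_ subset_closure
    calc closure (convexHull ℝ F) ⊆ convexHull ℝ (frontier (closure (convexHull ℝ F))) :=
          subset_convexHull_frontier (isBounded_convexHull.2 hF).closure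
      _ = convexHull ℝ F := by rw [hfr]
  rw [hcl] at hE hfr
  exact ⟨hE, hfr⟩

end FiniteDimensional

end NormedSpace

/-- if `E_n` are convex compact subsets of `ℝ^p` (`p ≥ 2`) whose
boundaries converge in the Painlevé–Kuratowski sense to a nonempty compact set `F`,
then `E_n` converges to `E = conv F` and `∂E = F`. -/
theorem stmt_17 {p : ℕ} (hp : 2 ≤ p) (E : ℕ → Set (EuclideanSpace ℝ (Fin p)))
    (hconv : ∀ n, Convex ℝ (E n)) (hcpt : ∀ n, IsCompact (E n))
    (F : Set (EuclideanSpace ℝ (Fin p))) (hFcpt : IsCompact F) (hFne : F.Nonempty)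
    (hK : KConv (fun n => frontier (E n)) F) :
    KConv E (convexHull ℝ F) ∧ frontier (convexHull ℝ F) = F :=
  stmt_17_general (by simpa [← Module.finrank_eq_rank] using Nat.lt_of_succ_le hp) E hconv F
    hFcpt.isBounded hFne hK
end

section
/- Let f : ℝ² → ℝ be the polynomial f(x, y) = x(x − y)². Then there is no sequence of nonzero real numbers t_n → 0 such that the level sets f⁻¹(t_n) converge in the Painlevé–Kuratowski sense to the zero set f⁻¹(0). -/
open Filter Topology Metric MeasureTheory

/-! A level set through points close to a local minimum `p` of `f` has level at least `f p`, and
one through points close to a local maximum `q` has level at most `f q`. On the line `x = y` the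
polynomial `x (x - y) ^ 2` takes the value `0`, with a local minimum at `(1, 1)` and a local maximum
at `(-1, -1)`; level sets approximating both points must therefore have level exactly `0`. -/

section LevelSets

variable {α β : Type*} [TopologicalSpace α]

theorem eventually_exists_mem_of_mem_KLiminf {A : ℕ → Set α} {x : α} {p : α → Prop}
    (hx : x ∈ KLiminf A) (hp : ∀ᶠ z in 𝓝 x, p z) : ∀ᶠ n in atTop, ∃ z ∈ A n, p z := by
  obtain ⟨u, hu_mem, hu_lim⟩ := hx
  filter_upwards [hu_lim.eventually hp] with n hn using ⟨u n, hu_mem n, hn⟩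

theorem eventually_le_level_of_isLocalMin [Preorder β] {f : α → β} {t : ℕ → β} {x : α}
    (hf : IsLocalMin f x) (hx : x ∈ KLiminf fun n => {z | f z = t n}) :
    ∀ᶠ n in atTop, f x ≤ t n := by
  filter_upwards [eventually_exists_mem_of_mem_KLiminf hx hf] with n ⟨z, hz, hxz⟩
  exact hxz.trans_eq hz

theorem eventually_level_le_of_isLocalMax [Preorder β] {f : α → β} {t : ℕ → β} {x : α}
    (hf : IsLocalMax f x) (hx : x ∈ KLiminf fun n => {z | f z = t n}) :
    ∀ᶠ n in atTop, t n ≤ f x :=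
  eventually_le_level_of_isLocalMin (β := βᵒᵈ) hf hx

theorem eventually_level_eq_of_isLocalMin_of_isLocalMax [PartialOrder β] {f : α → β} {t : ℕ → β}
    {x y : α} {c : β} (hfx : IsLocalMin f x) (hfy : IsLocalMax f y) (hxc : f x = c) (hyc : f y = c)
    (hx : x ∈ KLiminf fun n => {z | f z = t n}) (hy : y ∈ KLiminf fun n => {z | f z = t n}) :
    ∀ᶠ n in atTop, t n = c := by
  filter_upwards [eventually_le_level_of_isLocalMin hfx hx,
    eventually_level_le_of_isLocalMax hfy hy] with n hxn hyn
  exact le_antisymm (hyn.trans_eq hyc) (hxc.symm.trans_le hxn)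

end LevelSets

section LocalExtrema

variable {α R : Type*} [TopologicalSpace α] [MulZeroClass R] [LinearOrder R] [TopologicalSpace R]
  [OrderClosedTopology R] {g h : α → R} {x : α}

theorem isLocalMin_mul_of_pos_of_eq_zero [PosMulMono R] (hg : ContinuousAt g x) (hgx : 0 < g x)
    (hh : 0 ≤ h) (hhx : h x = 0) : IsLocalMin (fun z => g z * h z) x := by
  filter_upwards [hg.eventually_const_lt hgx] with z hz
  simpa only [hhx, mul_zero] using mul_nonneg hz.le (hh z)

theorem isLocalMax_mul_of_neg_of_eq_zero [MulPosMono R] (hg : ContinuousAt g x) (hgx : g x < 0)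
    (hh : 0 ≤ h) (hhx : h x = 0) : IsLocalMax (fun z => g z * h z) x := by
  filter_upwards [hg.eventually_lt_const hgx] with z hz
  simpa only [hhx, mul_zero] using mul_nonpos_of_nonpos_of_nonneg hz.le (hh z)

end LocalExtrema

theorem stmt_19_general {R : Type*} [Ring R] [LinearOrder R] [IsStrictOrderedRing R]
    [TopologicalSpace R] [OrderClosedTopology R] {t : ℕ → R}
    (hsub : {z : R × R | z.1 * (z.1 - z.2) ^ 2 = 0} ⊆
      KLiminf fun n => {z : R × R | z.1 * (z.1 - z.2) ^ 2 = t n}) :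
    ∀ᶠ n in atTop, t n = 0 := by
  let f : R × R → R := fun z => z.1 * (z.1 - z.2) ^ 2
  have hsq : (0 : R × R → R) ≤ fun z => (z.1 - z.2) ^ 2 := fun z => sq_nonneg (z.1 - z.2)
  have hdiag (a : R) : f (a, a) = 0 := by simp [f]
  have hmin : IsLocalMin f (1, 1) :=
    isLocalMin_mul_of_pos_of_eq_zero continuousAt_fst one_pos hsq (by simp)
  have hmax : IsLocalMax f (-1, -1) :=
    isLocalMax_mul_of_neg_of_eq_zero continuousAt_fst neg_one_lt_zero hsq (by simp)
  exact eventually_level_eq_of_isLocalMin_of_isLocalMax hmin hmax (hdiag 1) (hdiag (-1))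
    (hsub (hdiag 1)) (hsub (hdiag (-1)))

/-- for `f(x, y) = x(x - y)²` on `ℝ²` there is no sequence of nonzero
levels `t_n → 0` whose level sets `f⁻¹(t_n)` converge in the Painlevé–Kuratowski sense
to the zero set `f⁻¹(0)`. -/
theorem stmt_19 :
    ¬ ∃ t : ℕ → ℝ, (∀ n, t n ≠ 0) ∧ Tendsto t atTop (𝓝 0) ∧
      KConv (fun n => {z : ℝ × ℝ | z.1 * (z.1 - z.2) ^ 2 = t n})
        {z : ℝ × ℝ | z.1 * (z.1 - z.2) ^ 2 = 0} := by
  rintro ⟨t, ht, -, hliminf, -⟩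
  exact (stmt_19_general hliminf.ge).exists.elim ht
end
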